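/- arXiv:1811.02126 — 2 statements merged into one kernel-verified Lean document; each statement's English description precedes it below -/
import Mathlib

section
/- Let (X, 𝒜) be a measurable space. The family 𝓑^R = {B_f^R : f ∈ M(X,𝒜)} is a σ-algebra of subsets of RMax(X,𝒜): it contains the empty set and RMax(X,𝒜) itself; for every f ∈ M(X,𝒜) the complement RMax(X,𝒜) \ B_f^R is again of the form B_g^R for some g ∈ M(X,𝒜); and for every sequence (f_n)_{n∈ℕ} in M(X,𝒜) the union ⋃_{n∈ℕ} B_{f_n}^R is again of the form B_g^R for some g ∈ M(X,𝒜). -/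
/-!
Membership in an ideal of `M(X,𝒜)` depends only on zero sets: if `Z(f) ⊆ Z(g)` then
`g = f · (f⁻¹ g)` with the pointwise inverse (`0⁻¹ = 0`), so `f ∈ M` forces `g ∈ M`
(`mem_of_zeros`). In particular members of a proper ideal have zeros (`exists_zero`).

The complement of `B_f` is `B_g` for `g` the indicator of `Z(f)`: `f g = 0` while `f² + g²` has no
zero. The union of the `B_{f_n}` is `B_g` for `g` the indicator of the complement of
`U = ⋃ Z(f_n)`. Only here does reality matter: if `g ∈ M`, let `h` send a point of `U` to
the least `n` with `f_n x = 0`, and take `r` with `h - r ∈ M`. Then `g² + (h - r)² ∈ M` has a zero,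
so `r` is some natural number `n` attained by `h` on `U`, and the zeros of `g² + (h - r)²` are
zeros of `f_n`; hence `f_n ∈ M`.
-/

open MeasureTheory

/-- The ring `M(X, 𝒜)` of all real-valued measurable functions on a measurable
space `X`, as a subring of `X → ℝ` under pointwise operations. -/
def Mring (X : Type*) [MeasurableSpace X] : Subring (X → ℝ) where
  carrier := {f : X → ℝ | Measurable f}
  mul_mem' hf hg := hf.mul hg
  one_mem' := measurable_one
  add_mem' hf hg := hf.add hg
  zero_mem' := measurable_zero
  neg_mem' hf := hf.neg

/-- The constant function with value `r`, as an element of `M(X, 𝒜)`. -/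
def constM (X : Type*) [MeasurableSpace X] (r : ℝ) : Mring X :=
  ⟨fun _ => r, measurable_const⟩

/-- A real maximal ideal: a maximal ideal modulo which every function is
congruent to a constant. -/
def IsRealMax {X : Type*} [MeasurableSpace X] (M : Ideal (Mring X)) : Prop :=
  M.IsMaximal ∧ ∀ f : Mring X, ∃ r : ℝ, f - constM X r ∈ M

/-- `RMax(X,𝒜)`: the set of real maximal ideals of `M(X,𝒜)`. -/
def RMax (X : Type*) [MeasurableSpace X] : Type _ :=
  {M : Ideal (Mring X) // IsRealMax M}

/-- `B_f^R = {M ∈ RMax(X,𝒜) : f ∈ M}`. -/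
def BR (X : Type*) [MeasurableSpace X] (f : Mring X) : Set (RMax X) :=
  {M : RMax X | f ∈ M.1}

theorem mem_of_zeros {X : Type*} [MeasurableSpace X] (M : Ideal (Mring X)) {f g : Mring X}
    (hf : f ∈ M) (h : ∀ x, f.1 x = 0 → g.1 x = 0) : g ∈ M := by
  have hfm : Measurable f.1 := f.2
  have hgm : Measurable g.1 := g.2
  have key : g = (⟨fun x => (f.1 x)⁻¹ * g.1 x, hfm.inv.mul hgm⟩ : Mring X) * f := by
    apply Subtype.ext
    funext x
    change g.1 x = (f.1 x)⁻¹ * g.1 x * f.1 x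
    by_cases hx : f.1 x = 0
    · simp [hx, h x hx]
    · field_simp
  rw [key]
  exact M.mul_mem_left _ hf

theorem exists_zero {X : Type*} [MeasurableSpace X] {M : Ideal (Mring X)} (hM : M ≠ ⊤)
    {f : Mring X} (hf : f ∈ M) : ∃ x, f.1 x = 0 := by
  by_contra! hne
  exact hM ((Ideal.eq_top_iff_one M).2 (mem_of_zeros M hf fun x hx => absurd hx (hne x)))

/-- Zero sets of members of an ideal are closed under binary intersection: the function
`f² + g²` vanishes exactly on `Z(f) ∩ Z(g)`. -/
theorem exists_inter {X : Type*} [MeasurableSpace X] {M : Ideal (Mring X)}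
    {f g : Mring X} (hf : f ∈ M) (hg : g ∈ M) :
    ∃ k ∈ M, ∀ x, k.1 x = 0 ↔ f.1 x = 0 ∧ g.1 x = 0 := by
  refine ⟨f * f + g * g, M.add_mem (M.mul_mem_left _ hf) (M.mul_mem_left _ hg), fun x => ?_⟩
  change f.1 x * f.1 x + g.1 x * g.1 x = 0 ↔ _
  exact mul_self_add_mul_self_eq_zero

/-- Every measurable set is a zero set, namely that of the indicator of its complement. -/
theorem exists_zeros_eq {X : Type*} [MeasurableSpace X] {s : Set X} (hs : MeasurableSet s) :
    ∃ g : Mring X, ∀ x, g.1 x = 0 ↔ x ∈ s :=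
  ⟨⟨sᶜ.indicator 1, measurable_one.indicator hs.compl⟩, fun x => by
    by_cases hx : x ∈ s <;> simp [hx]⟩

theorem measurableSet_zeros {X : Type*} [MeasurableSpace X] (f : Mring X) :
    MeasurableSet {x | f.1 x = 0} :=
  measurableSet_eq_fun (show Measurable f.1 from f.2) measurable_const

/-- The family `{B_f^R : f ∈ M(X,𝒜)}` is a σ-algebra over `RMax(X,𝒜)`: it
contains `∅` and the whole set, is closed under complements, and is closed
under countable unions. -/
theorem stmt1 {X : Type*} [MeasurableSpace X] :
    (∃ f : Mring X, BR X f = (∅ : Set (RMax X))) ∧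
    (∃ f : Mring X, BR X f = (Set.univ : Set (RMax X))) ∧
    (∀ f : Mring X, ∃ g : Mring X, (BR X f)ᶜ = BR X g) ∧
    (∀ F : ℕ → Mring X, ∃ g : Mring X, (⋃ n : ℕ, BR X (F n)) = BR X g) := by
  classical
  refine ⟨⟨1, ?_⟩, ⟨0, ?_⟩, fun f => ?_, fun F => ?_⟩
  · ext M
    exact iff_of_false ((Ideal.ne_top_iff_one _).1 M.2.1.ne_top) (Set.notMem_empty M)
  · ext M
    exact iff_of_true M.1.zero_mem (Set.mem_univ M)
  · obtain ⟨g, hg⟩ := exists_zeros_eq (measurableSet_zeros f).compl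
    refine ⟨g, ?_⟩
    ext M
    change f ∉ M.1 ↔ g ∈ M.1
    constructor
    · intro hf
      have hfg : f * g ∈ M.1 := mem_of_zeros M.1 M.1.zero_mem fun x _ => by
        change f.1 x * g.1 x = 0
        by_cases hx : f.1 x = 0
        · simp [hx]
        · simp [(hg x).2 hx]
      exact (M.2.1.isPrime.mem_or_mem hfg).resolve_left hf
    · intro hgM hf
      obtain ⟨k, hk, hkz⟩ := exists_inter hf hgM
      obtain ⟨x, hx⟩ := exists_zero M.2.1.ne_top hk
      obtain ⟨h1, h2⟩ := (hkz x).1 hx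
      exact (hg x).1 h2 h1
  · have hU : MeasurableSet (⋃ n, {x | (F n).1 x = 0}) :=
      MeasurableSet.iUnion fun n => measurableSet_zeros (F n)
    obtain ⟨g, hg⟩ := exists_zeros_eq hU
    refine ⟨g, ?_⟩
    ext M
    rw [Set.mem_iUnion]
    change (∃ n, F n ∈ M.1) ↔ g ∈ M.1
    constructor
    · rintro ⟨n, hn⟩
      exact mem_of_zeros M.1 hn fun x hx => (hg x).2 (Set.mem_iUnion.2 ⟨n, hx⟩)
    · intro hgM
      -- The alternative `g x ≠ 0` makes the search total; off the union it returns `0`.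
      have hp : ∀ x, ∃ n, (F n).1 x = 0 ∨ g.1 x ≠ 0 := fun x => by
        by_cases hx : g.1 x = 0
        · obtain ⟨n, hn⟩ := Set.mem_iUnion.1 ((hg x).1 hx)
          exact ⟨n, Or.inl hn⟩
        · exact ⟨0, Or.inr hx⟩
      have hm : Measurable fun x => Nat.find (hp x) :=
        measurable_find hp fun n =>
          (measurableSet_zeros (F n)).union (measurableSet_zeros g).compl
      let h : Mring X := ⟨fun x => (Nat.find (hp x) : ℝ), measurable_from_top.comp hm⟩
      obtain ⟨r, hr⟩ := M.2.2 h
      obtain ⟨k, hk, hkz⟩ := exists_inter hgM hr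
      obtain ⟨x, hx⟩ := exists_zero M.2.1.ne_top hk
      have hval : ∀ y, k.1 y = 0 → g.1 y = 0 ∧ (Nat.find (hp y) : ℝ) = r := fun y hy =>
        ⟨((hkz y).1 hy).1, sub_eq_zero.1 ((hkz y).1 hy).2⟩
      refine ⟨Nat.find (hp x), mem_of_zeros M.1 hk fun y hy => ?_⟩
      have hxy : Nat.find (hp y) = Nat.find (hp x) := by
        exact_mod_cast (hval y hy).2.trans (hval x hx).2.symm
      rw [← hxy]
      exact (Nat.find_spec (hp y)).resolve_right (not_not.2 (hval y hy).1)
end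

section
/- Let (X,𝒜) be a separated measurable space and let x ∈ X. Then the fixed maximal ideal M_x is an isolated point of the space RMax(X,𝒜) with its subspace hull-kernel topology if and only if the singleton {x} belongs to 𝒜. -/
/-! The complements of the sets `B_f^R` form a base of `RMax(X,𝒜)`, because maximal ideals are
prime (`exists_basic_nhd`). If `M_x` is isolated, there is therefore `f` with `f x ≠ 0` such that
`M_x` is the only real maximal ideal omitting `f`. Every fixed ideal `M_y` is real maximal, and
`y ↦ M_y` is injective as the space is separated, so `{x} = {y | f y ≠ 0}` is measurable.

Conversely, if `{x}` is measurable, its indicator `e` is an idempotent and `M_x` is the annihilator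
of `e`. A prime ideal omitting `e` contains this annihilator, hence equals `M_x` by maximality, so
`{M_x}` is the complement of `B_e^R`. -/

open MeasureTheory

/-- The (subspace) hull-kernel topology on `RMax(X,𝒜)`: the sets `B_f^R` form a
base for the closed sets. -/
instance RMaxTop (X : Type*) [MeasurableSpace X] : TopologicalSpace (RMax X) :=
  TopologicalSpace.generateFrom {U : Set (RMax X) | ∃ f : Mring X, U = (BR X f)ᶜ}

/-- The fixed ideal `M_p = {f ∈ M(X,𝒜) : f(p) = 0}`. -/
def Mp (X : Type*) [MeasurableSpace X] (p : X) : Ideal (Mring X) where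
  carrier := {f : Mring X | (f : X → ℝ) p = 0}
  add_mem' := by
    intro a b ha hb
    simp only [Set.mem_setOf_eq] at *
    show ((a + b : Mring X) : X → ℝ) p = 0
    simp [ha, hb]
  zero_mem' := by simp only [Set.mem_setOf_eq]; rfl
  smul_mem' := by
    intro c f hf
    simp only [Set.mem_setOf_eq, smul_eq_mul] at *
    show ((c * f : Mring X) : X → ℝ) p = 0
    simp [hf]

/-- A measurable space is separated if any two distinct points are separated by
a measurable set containing exactly one of them. -/
def Separated (X : Type*) [MeasurableSpace X] : Prop :=
  ∀ p q : X, p ≠ q → ∃ E : Set X, MeasurableSet E ∧ Xor' (p ∈ E) (q ∈ E)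

theorem mem_Mp {X : Type*} [MeasurableSpace X] (p : X) (f : Mring X) :
    f ∈ Mp X p ↔ (f : X → ℝ) p = 0 := Iff.rfl

theorem isRealMax_Mp {X : Type*} [MeasurableSpace X] (p : X) : IsRealMax (Mp X p) := by
  refine ⟨?_, fun f => ⟨(f : X → ℝ) p, sub_self ((f : X → ℝ) p)⟩⟩
  -- `M_p` is the kernel of evaluation at `p`, which maps onto the field `ℝ`.
  let ev : Mring X →+* ℝ := (Pi.evalRingHom (fun _ : X => ℝ) p).comp (Mring X).subtype
  have hev : Function.Surjective ev := fun r => ⟨constM X r, rfl⟩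
  have hker : RingHom.ker ev = Mp X p := by
    ext f
    exact RingHom.mem_ker
  exact hker ▸ RingHom.ker_isMaximal_of_surjective ev hev

/-- Complements of the sets `B_f^R` are a base, not merely a subbase, of the topology: they are
stable under finite intersections, a maximal ideal omitting `f` and `g` also omitting `f * g`. -/
theorem exists_basic_nhd {X : Type*} [MeasurableSpace X] {U : Set (RMax X)} (hU : IsOpen U) :
    ∀ M ∈ U, ∃ f : Mring X, f ∉ M.1 ∧ ∀ N : RMax X, f ∉ N.1 → N ∈ U := by
  induction hU with
  | basic s hs =>
    obtain ⟨f, rfl⟩ := hs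
    exact fun M hM => ⟨f, hM, fun N hN => hN⟩
  | univ =>
    exact fun M _ => ⟨1, (Ideal.ne_top_iff_one _).1 M.2.1.ne_top, fun _ _ => trivial⟩
  | inter s t _ _ ihs iht =>
    rintro M ⟨hs, ht⟩
    obtain ⟨f, hf, hfs⟩ := ihs M hs
    obtain ⟨g, hg, hgt⟩ := iht M ht
    refine ⟨f * g, fun hfg => (M.2.1.isPrime.mem_or_mem hfg).elim hf hg, fun N hN => ⟨?_, ?_⟩⟩
    · exact hfs N fun hfN => hN (N.1.mul_mem_right g hfN)
    · exact hgt N fun hgN => hN (N.1.mul_mem_left f hgN)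
  | sUnion S _ ih =>
    rintro M ⟨s, hsS, hMs⟩
    obtain ⟨f, hf, hfs⟩ := ih s hsS M hMs
    exact ⟨f, hf, fun N hN => ⟨s, hsS, hfs N hN⟩⟩

/-- The indicator function of a measurable set, as an element of `M(X, 𝒜)`. -/
noncomputable def indM {X : Type*} [MeasurableSpace X] (E : Set X) (hE : MeasurableSet E) :
    Mring X :=
  ⟨E.indicator 1, measurable_one.indicator hE⟩

theorem Mp_injective {X : Type*} [MeasurableSpace X] (hsep : Separated X) :
    Function.Injective (Mp X) := by
  intro p q hpq
  by_contra hne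
  obtain ⟨E, hE, hx⟩ := hsep p q hne
  have key : ∀ y, indM E hE ∈ Mp X y ↔ y ∉ E := fun y => by
    simp [mem_Mp, indM]
  have : p ∉ E ↔ q ∉ E := by rw [← key, ← key, hpq]
  rcases hx with ⟨h1, h2⟩ | ⟨h1, h2⟩ <;> tauto

/-- For a separated measurable space, the fixed maximal ideal `M_x` is an
isolated point of `RMax(X,𝒜)` iff the singleton `{x}` is measurable. -/
theorem stmt7 {X : Type*} [MeasurableSpace X] (hsep : Separated X) (x : X)
    (h : IsRealMax (Mp X x)) :
    IsOpen ({⟨Mp X x, h⟩} : Set (RMax X)) ↔ MeasurableSet ({x} : Set X) := by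
  constructor
  · intro hopen
    obtain ⟨f, hf, hfU⟩ := exists_basic_nhd hopen _ rfl
    have hset : ({x} : Set X) = {y | (f : X → ℝ) y ≠ 0} := by
      ext y
      refine ⟨?_, fun hy => ?_⟩
      · rintro rfl
        exact hf
      · exact Mp_injective hsep (congrArg Subtype.val (hfU ⟨Mp X y, isRealMax_Mp y⟩ hy))
    rw [hset]
    exact (measurableSet_eq_fun f.2 measurable_const).compl
  · intro hx
    have hset : ({⟨Mp X x, h⟩} : Set (RMax X)) = (BR X (indM {x} hx))ᶜ := by
      ext M
      refine ⟨?_, fun hM => ?_⟩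
      · rintro rfl hmem
        have : Set.indicator ({x} : Set X) (1 : X → ℝ) x = 0 := hmem
        simp at this
      · have hle : Mp X x ≤ M.1 := by
          intro g hg
          have hmul : g * indM {x} hx = 0 := by
            ext y
            change (g : X → ℝ) y * Set.indicator ({x} : Set X) (1 : X → ℝ) y = 0
            by_cases hy : y = x
            · subst hy
              rw [(mem_Mp _ g).1 hg, zero_mul]
            · simp [hy]
          have hmem : g * indM {x} hx ∈ M.1 := hmul ▸ M.1.zero_mem
          exact (M.2.1.isPrime.mem_or_mem hmem).resolve_right hM
        exact Subtype.ext (h.1.eq_of_le M.2.1.ne_top hle).symm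
    rw [hset]
    exact TopologicalSpace.isOpen_generateFrom_of_mem ⟨_, rfl⟩
end
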